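/- Let p be a prime and let G be a subgroup of the symmetric group Sym(ℤ/pℤ) that is solvable and acts transitively on ℤ/pℤ. Then G is conjugate in Sym(ℤ/pℤ) to a subgroup of the affine group, i.e., after conjugation every element of G has the form x ↦ a·x + b with a ∈ (ℤ/pℤ)ˣ and b ∈ ℤ/pℤ. -/

import Mathlib

/-!
Since `p` is prime, the transitive group `G` acts primitively, so each nontrivial normal subgroup
of `G` is again transitive. Applied to the last nontrivial term `N` of the derived series, this
gives a transitive abelian normal subgroup. A transitive abelian permutation group is regular, so
`N` has order `p` and is generated by any of its elements `c ≠ 1`.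
Labelling the point `c ^ k • 0` by `k` turns `c` into the translation `x ↦ x + 1`. By normality
`σ c σ⁻¹ = c ^ m` for each `σ ∈ G`, so the relabelled `f = τ σ τ⁻¹` satisfies
`f (x + 1) = f x + m`, which makes it affine; injectivity of `f` forces `m ≠ 0`.
-/

open MulAction

/-- The witness is the last nontrivial term of the derived series. -/
theorem exists_abelian_normal_ne_bot {H : Type*} [Group H] [Nontrivial H]
    (hH : Group.IsSolvable H) :
    ∃ N : Subgroup H, N.Normal ∧ N ≠ ⊥ ∧ ∀ a ∈ N, ∀ b ∈ N, a * b = b * a := by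
  classical
  have hex := hH.solvable
  obtain ⟨n, hn⟩ : ∃ n, Nat.find hex = n + 1 := by
    refine Nat.exists_eq_succ_of_ne_zero fun h0 => ?_
    have h := Nat.find_spec hex
    rw [h0, derivedSeries_zero] at h
    exact top_ne_bot h
  refine ⟨derivedSeries H n, derivedSeries_normal H n,
    Nat.find_min hex (by omega), fun a ha b hb => ?_⟩
  have h := Nat.find_spec hex
  rw [hn, derivedSeries_succ, Subgroup.commutator_eq_bot_iff_le_centralizer] at h
  exact (Subgroup.mem_centralizer_iff.mp (h ha) b hb).symm

/-- The permutation `c` generates a regular normal subgroup of `G`: regularity is recorded as the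
injectivity of `c ^ i ↦ (c ^ i) 0`, and normality as `σ c σ⁻¹` being a power of `c`. -/
theorem exists_regular_normal_generator (p : ℕ) [Fact p.Prime]
    (G : Subgroup (Equiv.Perm (ZMod p))) (hsolv : Group.IsSolvable G)
    (htrans : ∀ x y : ZMod p, ∃ σ ∈ G, σ x = y) :
    ∃ c : Equiv.Perm (ZMod p), orderOf c = p ∧
      (∀ i j : ℕ, (c ^ i) 0 = (c ^ j) 0 → c ^ i = c ^ j) ∧
      ∀ σ ∈ G, ∃ m : ℕ, σ * c * σ⁻¹ = c ^ m := by
  have hp : p.Prime := Fact.out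
  have : IsPretransitive G (ZMod p) := ⟨fun x y => by
    obtain ⟨σ, hσ, h⟩ := htrans x y
    exact ⟨⟨σ, hσ⟩, h⟩⟩
  have : Nontrivial G := by
    obtain ⟨σ, hσ, h⟩ := htrans 0 1
    refine ⟨⟨σ, hσ⟩, 1, fun h1 => ?_⟩
    have h2 : σ = 1 := congrArg Subtype.val h1
    simp [h2] at h
  have : IsPreprimitive G (ZMod p) := IsPreprimitive.of_prime_card (by simpa using hp)
  obtain ⟨N, hN, hne, hcomm⟩ := exists_abelian_normal_ne_bot hsolv
  have hNt : IsPretransitive N (ZMod p) := by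
    refine IsQuasiPreprimitive.isPretransitive_of_normal (G := G) fun h => hne ?_
    rw [Subgroup.eq_bot_iff_forall]
    intro g hg
    ext x
    have hx : x ∈ fixedPoints N (ZMod p) := h ▸ Set.mem_univ x
    exact hx ⟨g, hg⟩
  -- In an abelian transitive group, elements agreeing at `0` agree at every `h • 0`.
  have hreg : ∀ a b : N, a • (0 : ZMod p) = b • (0 : ZMod p) → a = b := by
    intro a b hab
    have hNc : ∀ u v : N, u * v = v * u := fun u v =>
      Subtype.ext (hcomm u u.2 v v.2)
    refine eq_of_smul_eq_smul fun x : ZMod p => ?_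
    obtain ⟨h, rfl⟩ := exists_smul_eq N (0 : ZMod p) x
    rw [smul_smul, smul_smul, hNc a, hNc b, mul_smul, mul_smul, hab]
  have hcard : Nat.card N = p := by
    rw [Nat.card_congr (Equiv.ofBijective (fun a : N => a • (0 : ZMod p))
      ⟨fun a b => hreg a b, fun x => exists_smul_eq N (0 : ZMod p) x⟩), Nat.card_zmod]
  have : Finite N := Nat.finite_of_card_ne_zero (by rw [hcard]; exact hp.ne_zero)
  obtain ⟨c, hc1⟩ := Subgroup.ne_bot_iff_exists_ne_one.mp hne
  let φ : N →* Equiv.Perm (ZMod p) := G.subtype.comp N.subtype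
  have hφ : Function.Injective φ := G.subtype_injective.comp N.subtype_injective
  have key : ∀ b : N, ∃ m : ℕ, c ^ m = b :=
    fun b => mem_powers_of_prime_card hcard hc1
  refine ⟨φ c, ?_, ?_, ?_⟩
  · have hpow : c ^ Nat.card N = 1 := pow_card_eq_one'
    rw [orderOf_injective φ hφ]
    exact orderOf_eq_prime (orderOf_dvd_iff_pow_eq_one.mp
      ((orderOf_dvd_of_pow_eq_one hpow).trans hcard.dvd)) hc1
  · intro i j h
    rw [← map_pow, ← map_pow] at h ⊢
    exact congrArg φ (hreg _ _ h)
  · intro σ hσ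
    obtain ⟨m, hm⟩ := key ⟨⟨σ, hσ⟩ * c * (⟨σ, hσ⟩ : G)⁻¹, hN.conj_mem _ c.2 _⟩
    refine ⟨m, ?_⟩
    rw [← map_pow, hm]
    rfl

/-- Galois: a solvable transitive subgroup `G` of `Sym(ℤ/pℤ)` (`p` prime) is conjugate
in `Sym(ℤ/pℤ)` to a subgroup of the affine group: after conjugation every element of
`G` has the form `x ↦ a * x + b` with `a ∈ (ℤ/pℤ)ˣ`, `b ∈ ℤ/pℤ`. -/
theorem solvable_transitive_conjugate_to_affine (p : ℕ) [Fact p.Prime]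
    (G : Subgroup (Equiv.Perm (ZMod p))) (hsolv : IsSolvable G)
    (htrans : ∀ x y : ZMod p, ∃ σ ∈ G, σ x = y) :
    ∃ τ : Equiv.Perm (ZMod p), ∀ σ ∈ G,
      ∃ (a : (ZMod p)ˣ) (b : ZMod p), ∀ x, (τ * σ * τ⁻¹) x = a * x + b := by
  obtain ⟨c, hord, hreg, hconj⟩ := exists_regular_normal_generator p G hsolv htrans
  have hinj : Function.Injective (fun k : ZMod p => (c ^ k.val) 0) := by
    intro i j h
    have h1 := pow_eq_pow_iff_modEq.mp (hreg _ _ h)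
    rw [hord, ← ZMod.natCast_eq_natCast_iff] at h1
    simpa using h1
  let e : Equiv.Perm (ZMod p) := Equiv.ofBijective _ (Finite.injective_iff_bijective.mp hinj)
  have he : ∀ n : ℕ, e (n : ZMod p) = (c ^ n) 0 := by
    intro n
    change (c ^ (n : ZMod p).val) 0 = _
    rw [ZMod.val_natCast]
    have h := pow_mod_orderOf c n
    rw [hord] at h
    rw [h]
  have hadd : ∀ (x : ZMod p) (m : ℕ), e (x + m) = (c ^ m) (e x) := by
    intro x m
    obtain ⟨n, rfl⟩ := ZMod.natCast_zmod_surjective x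
    rw [he, ← Nat.cast_add, he, add_comm, pow_add, Equiv.Perm.mul_apply]
  refine ⟨e⁻¹, fun σ hσ => ?_⟩
  obtain ⟨m, hm⟩ := hconj σ hσ
  set f : Equiv.Perm (ZMod p) := e⁻¹ * σ * e⁻¹⁻¹ with hf
  have hef : ∀ x, e (f x) = σ (e x) := fun x => by simp [hf]
  have hstep : ∀ x, f (x + 1) = f x + m := by
    intro x
    apply e.injective
    have h1 : e (x + 1) = c (e x) := by simpa using hadd x 1
    rw [hadd, hef, hef, h1, ← hm]
    simp
  have hlin : ∀ n : ℕ, f (n : ZMod p) = m * n + f 0 := by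
    intro n
    induction n with
    | zero => simp
    | succ n ih => push_cast; rw [hstep, ih]; ring
  have hm0 : (m : ZMod p) ≠ 0 := by
    intro h0
    have h1 := hstep 0
    rw [h0, add_zero] at h1
    simpa using f.injective h1
  refine ⟨Units.mk0 _ hm0, f 0, fun x => ?_⟩
  obtain ⟨n, rfl⟩ := ZMod.natCast_zmod_surjective x
  exact hlin n
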